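/- Strong Fenchel duality for the regularized conic relaxation: suppose (x*, t*, z*) is an optimal solution attaining η_CR, let α be defined from x*, and set p*_j = γ Σ_{i=1}^m α_i A_{ij} for j = 1,…,n. Then the infimum over x ∈ ℝ^n and z ∈ [0,1]^n of L(x) + Σ_{j=1}^n ( μ z_j + p*_j x_j / γ − (p*_j)² z_j / (4γ) ) equals η_CR; in particular the Fenchel dual value sup_{p ∈ ℝ^n} inf_{x ∈ ℝ^n, z ∈ [0,1]^n} [ L(x) + Σ_{j=1}^n ( μ z_j + p_j x_j / γ − p_j² z_j / (4γ) ) ] equals η_CR (there is no duality gap). -/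

import Mathlib

/-- The logistic loss `L(x) = (1/m) ∑ᵢ log (1 + exp (-yᵢ (A x)ᵢ))`. -/
noncomputable def logLoss (m n : ℕ) (A : Fin m → Fin n → ℝ) (y : Fin m → ℝ)
    (x : Fin n → ℝ) : ℝ :=
  (1 / (m : ℝ)) * ∑ i, Real.log (1 + Real.exp (-(y i) * ∑ j, A i j * x j))

/-!
For `z ≥ 0`, the cone constraint `t ≥ 0, x² ≤ z t` says that `p x ≤ t + p² z / 4` for every slope
`p`. Read as a family of half-spaces this makes the feasible set convex, and read for one fixed `p`
it is weak duality. The point `(p z / 2, p² z / 4, z)` is feasible and gives equality.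

Let `(x*, t*, z*)` be optimal for a convex loss `f` differentiable at `x*`, and let
`p = -γ ∇f(x*)`. Then `x ↦ f x + ⟨p, x⟩ / γ` is convex and stationary at `x*`, so the inner infimum
over `x` is attained at `x*`. First-order optimality of `(x*, t*, z*)` in the direction of
`(p z / 2, p² z / 4, z)` says precisely that the remaining function of `z` is bounded below by the
optimal value.
-/

section FirstOrder

variable {E : Type*} [NormedAddCommGroup E] [NormedSpace ℝ E] {f : E → ℝ} {f' : E →L[ℝ] ℝ} {x : E}

theorem fderiv_sub_nonneg_of_isMinOn {s : Set E} (hs : Convex ℝ s) (hx : x ∈ s)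
    (hmin : IsMinOn f s x) (hf : HasFDerivAt f f' x) {y : E} (hy : y ∈ s) : 0 ≤ f' (y - x) :=
  hmin.localize.hasFDerivWithinAt_nonneg hf.hasFDerivWithinAt
    (sub_mem_posTangentConeAt_of_segment_subset (hs.segment_subset hx hy))

theorem add_fderiv_sub_le_of_convexOn {s : Set E} (hconv : ConvexOn ℝ s f) (hx : x ∈ s)
    (hf : HasFDerivAt f f' x) {y : E} (hy : y ∈ s) : f x + f' (y - x) ≤ f y := by
  have hline : HasDerivAt (f ∘ AffineMap.lineMap (k := ℝ) x y) (f' (y - x)) 0 := by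
    refine HasFDerivAt.comp_hasDerivAt (0 : ℝ) ?_ AffineMap.hasDerivAt_lineMap
    rwa [AffineMap.lineMap_apply_zero]
  have hslope := (hconv.comp_affineMap (AffineMap.lineMap x y)).le_slope_of_hasDerivAt
    (by simpa using hx) (by simpa using hy) one_pos hline
  simp only [slope_def_field, Function.comp_apply, AffineMap.lineMap_apply_one,
    AffineMap.lineMap_apply_zero, sub_zero, div_one] at hslope
  linarith

theorem add_le_add_fderiv_sub_of_isMinOn {F : Type*} [NormedAddCommGroup F]
    [NormedSpace ℝ F] {ℓ : F →L[ℝ] ℝ} {s : Set (E × F)} (hs : Convex ℝ s) {v : F}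
    (hxv : (x, v) ∈ s) (hmin : IsMinOn (fun u : E × F => f u.1 + ℓ u.2) s (x, v))
    (hf : HasFDerivAt f f' x) {y : E} {w : F} (hyw : (y, w) ∈ s) :
    f x + ℓ v ≤ f x + f' (y - x) + ℓ w := by
  have hfst : HasFDerivAt (f ∘ Prod.fst) (f' ∘L .fst ℝ E F) (x, v) :=
    HasFDerivAt.comp (x, v) hf hasFDerivAt_fst
  have hderiv := hfst.add (ℓ ∘L .snd ℝ E F).hasFDerivAt
  have hnonneg := fderiv_sub_nonneg_of_isMinOn hs hxv hmin hderiv hyw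
  simp only [Prod.mk_sub_mk, add_apply, ContinuousLinearMap.comp_apply,
    ContinuousLinearMap.coe_fst', ContinuousLinearMap.coe_snd', map_sub ℓ] at hnonneg
  linarith

end FirstOrder

theorem convexOn_finset_sum {𝕜 E β κ : Type*} [Semiring 𝕜] [PartialOrder 𝕜] [AddCommMonoid E]
    [SMul 𝕜 E] [AddCommMonoid β] [PartialOrder β] [IsOrderedAddMonoid β] [Module 𝕜 β]
    {s : Set E} (hs : Convex 𝕜 s) {K : Finset κ} {g : κ → E → β}
    (hg : ∀ k ∈ K, ConvexOn 𝕜 s (g k)) : ConvexOn 𝕜 s (fun v => ∑ k ∈ K, g k v) := by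
  have hsum : ConvexOn 𝕜 s (∑ k ∈ K, g k) :=
    Finset.sum_induction g (ConvexOn 𝕜 s) (fun _ _ => ConvexOn.add) (convexOn_const 0 hs) hg
  simpa only [Finset.sum_fn] using hsum

/-- The dot product `x ↦ ∑ⱼ aⱼ xⱼ` with a fixed vector `a`, as a continuous linear form. -/
noncomputable def dotForm {ι : Type*} [Fintype ι] (a : ι → ℝ) : (ι → ℝ) →L[ℝ] ℝ :=
  ∑ j, a j • ContinuousLinearMap.proj j

theorem dotForm_apply {ι : Type*} [Fintype ι] (a x : ι → ℝ) :
    dotForm a x = ∑ j, a j * x j := by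
  simp only [dotForm, sum_apply, smul_apply, ContinuousLinearMap.proj_apply, smul_eq_mul]

theorem nonneg_and_sq_le_mul_iff_forall_mul_le {x t z : ℝ} (hz : 0 ≤ z) :
    0 ≤ t ∧ x ^ 2 ≤ z * t ↔ ∀ p : ℝ, p * x ≤ t + p ^ 2 * z / 4 := by
  constructor
  · rintro ⟨ht, hcone⟩ p
    have hsq : (p * x) ^ 2 ≤ (t + p ^ 2 * z / 4) ^ 2 := calc
      (p * x) ^ 2 = p ^ 2 * x ^ 2 := mul_pow p x 2
      _ ≤ p ^ 2 * (z * t) := by gcongr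
      _ ≤ (t + p ^ 2 * z / 4) ^ 2 := by linarith [sq_nonneg (t - p ^ 2 * z / 4)]
    exact le_of_abs_le (abs_le_of_sq_le_sq hsq (by positivity))
  · intro h
    have hdiscrim : discrim (z / 4) (-x) t ≤ 0 := discrim_le_zero fun p => by linarith [h p]
    refine ⟨by simpa using h 0, ?_⟩
    rw [discrim] at hdiscrim
    linarith

section ConicRelaxation

variable {ι : Type*}

/-- The feasible set of the conic relaxation, as a set of triples `(x, t, z)`. -/
def conicFeasible (ι : Type*) : Set ((ι → ℝ) × (ι → ℝ) × (ι → ℝ)) :=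
  {u | (∀ j, 0 ≤ u.2.1 j) ∧ (∀ j, 0 ≤ u.2.2 j ∧ u.2.2 j ≤ 1) ∧
    ∀ j, u.1 j ^ 2 ≤ u.2.2 j * u.2.1 j}

theorem mem_conicFeasible_iff {x t z : ι → ℝ} :
    (x, t, z) ∈ conicFeasible ι ↔
      ∀ j, (0 ≤ z j ∧ z j ≤ 1) ∧ ∀ p : ℝ, p * x j ≤ t j + p ^ 2 * z j / 4 := by
  constructor
  · rintro ⟨ht, hz, hcone⟩ j
    exact ⟨hz j, (nonneg_and_sq_le_mul_iff_forall_mul_le (hz j).1).1 ⟨ht j, hcone j⟩⟩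
  · intro h
    have hcone j := (nonneg_and_sq_le_mul_iff_forall_mul_le (h j).1.1).2 (h j).2
    exact ⟨fun j => (hcone j).1, fun j => (h j).1, fun j => (hcone j).2⟩

theorem convex_conicFeasible : Convex ℝ (conicFeasible ι) := by
  rintro ⟨x, t, z⟩ hu ⟨x', t', z'⟩ hv a b ha hb hab
  rw [mem_conicFeasible_iff] at hu hv
  refine mem_conicFeasible_iff.2 fun j => ⟨?_, fun p => ?_⟩
  · exact convex_Icc (0 : ℝ) 1 (hu j).1 (hv j).1 ha hb hab
  · have hx := mul_le_mul_of_nonneg_left ((hu j).2 p) ha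
    have hx' := mul_le_mul_of_nonneg_left ((hv j).2 p) hb
    simp only [Prod.smul_mk, Pi.add_apply, Pi.smul_apply, smul_eq_mul]
    linarith

theorem tight_mem_conicFeasible (p : ι → ℝ) {z : ι → ℝ} (hz : ∀ j, 0 ≤ z j ∧ z j ≤ 1) :
    (fun j => p j * z j / 2, fun j => p j ^ 2 * z j / 4, z) ∈ conicFeasible ι := by
  refine ⟨fun j => ?_, hz, fun j => le_of_eq (by ring)⟩
  have := (hz j).1
  positivity

variable [Fintype ι]

/-- The objective of the conic relaxation for a loss `f`, at a triple `(x, t, z)`. -/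
noncomputable def conicObjective (f : (ι → ℝ) → ℝ) (γ μ : ℝ)
    (u : (ι → ℝ) × (ι → ℝ) × (ι → ℝ)) : ℝ :=
  f u.1 + (1 / γ) * ∑ j, u.2.1 j + μ * ∑ j, u.2.2 j

/-- The function of `(x, z)` whose infimum over all `x` and `z ∈ [0, 1]^ι` is the Fenchel dual
function at `p`. -/
noncomputable def fenchelLagrangian (f : (ι → ℝ) → ℝ) (γ μ : ℝ) (p x z : ι → ℝ) : ℝ :=
  f x + ∑ j, (μ * z j + p j * x j / γ - p j ^ 2 * z j / (4 * γ))

/-- The Fenchel dual function, with values in `EReal` so that it may be `⊥`. -/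
noncomputable def fenchelDual (f : (ι → ℝ) → ℝ) (γ μ : ℝ) (p : ι → ℝ) : EReal :=
  sInf {v : EReal | ∃ x z : ι → ℝ, (∀ j, 0 ≤ z j ∧ z j ≤ 1) ∧
    v = (fenchelLagrangian f γ μ p x z : EReal)}

variable {f : (ι → ℝ) → ℝ} {γ μ : ℝ} {p x t z : ι → ℝ}

theorem fenchelLagrangian_le_conicObjective (hγ : 0 < γ) (hu : (x, t, z) ∈ conicFeasible ι)
    (p : ι → ℝ) : fenchelLagrangian f γ μ p x z ≤ conicObjective f γ μ (x, t, z) := by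
  rw [fenchelLagrangian, conicObjective, add_assoc, Finset.mul_sum, Finset.mul_sum,
    ← Finset.sum_add_distrib]
  gcongr with j
  have hyoung : p j * x j / γ ≤ (t j + p j ^ 2 * z j / 4) / γ := by
    gcongr
    exact (mem_conicFeasible_iff.1 hu j).2 (p j)
  calc μ * z j + p j * x j / γ - p j ^ 2 * z j / (4 * γ)
    _ ≤ μ * z j + (t j + p j ^ 2 * z j / 4) / γ - p j ^ 2 * z j / (4 * γ) := by gcongr
    _ = 1 / γ * t j + μ * z j := by ring

theorem fenchelDual_le_conicObjective (hγ : 0 < γ) (hu : (x, t, z) ∈ conicFeasible ι)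
    (p : ι → ℝ) : fenchelDual f γ μ p ≤ (conicObjective f γ μ (x, t, z) : EReal) :=
  sInf_le_of_le ⟨x, z, hu.2.1, rfl⟩
    (EReal.coe_le_coe_iff.2 (fenchelLagrangian_le_conicObjective hγ hu p))

theorem fenchelLagrangian_le_of_stationary (hconv : ConvexOn ℝ Set.univ f)
    (hf : HasFDerivAt f (dotForm fun j => -(p j / γ)) x) (w z : ι → ℝ) :
    fenchelLagrangian f γ μ p x z ≤ fenchelLagrangian f γ μ p w z := by
  have htangent := add_fderiv_sub_le_of_convexOn hconv (Set.mem_univ x) hf (Set.mem_univ w)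
  simp only [dotForm_apply, fenchelLagrangian, Pi.sub_apply, mul_sub, neg_mul, div_mul_eq_mul_div,
    Finset.sum_add_distrib, Finset.sum_sub_distrib, Finset.sum_neg_distrib] at htangent ⊢
  linarith

theorem conicObjective_eq_add_coprod (u : (ι → ℝ) × (ι → ℝ) × (ι → ℝ)) :
    conicObjective f γ μ u =
      f u.1 + (dotForm fun _ => 1 / γ).coprod (dotForm fun _ => μ) u.2 := by
  rw [conicObjective, ContinuousLinearMap.coprod_apply, dotForm_apply, dotForm_apply,
    Finset.mul_sum, Finset.mul_sum, add_assoc]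

theorem conicObjective_le_fenchelLagrangian
    (hf : HasFDerivAt f (dotForm fun j => -(p j / γ)) x) (hu : (x, t, z) ∈ conicFeasible ι)
    (hmin : IsMinOn (conicObjective f γ μ) (conicFeasible ι) (x, t, z))
    {c : ι → ℝ} (hc : ∀ j, 0 ≤ c j ∧ c j ≤ 1) :
    conicObjective f γ μ (x, t, z) ≤ fenchelLagrangian f γ μ p x c := by
  rw [funext conicObjective_eq_add_coprod] at hmin ⊢
  refine (add_le_add_fderiv_sub_of_isMinOn convex_conicFeasible hu hmin hf
    (tight_mem_conicFeasible p hc)).trans_eq ?_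
  simp only [fenchelLagrangian, ContinuousLinearMap.coprod_apply, dotForm_apply, add_assoc,
    ← Finset.sum_add_distrib]
  congr! 2 with j
  rw [Pi.sub_apply]
  ring

theorem strong_fenchel_duality_REG_general (hγ : 0 < γ) (hconv : ConvexOn ℝ Set.univ f)
    (hf : HasFDerivAt f (dotForm fun j => -(p j / γ)) x)
    (hu : (x, t, z) ∈ conicFeasible ι)
    (hmin : IsMinOn (conicObjective f γ μ) (conicFeasible ι) (x, t, z)) :
    fenchelDual f γ μ p = (conicObjective f γ μ (x, t, z) : EReal) ∧
      sSup {v : EReal | ∃ q, v = fenchelDual f γ μ q} =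
        (conicObjective f γ μ (x, t, z) : EReal) := by
  have hweak := fenchelDual_le_conicObjective (f := f) (μ := μ) hγ hu
  have hstrong : (conicObjective f γ μ (x, t, z) : EReal) ≤ fenchelDual f γ μ p := by
    refine le_sInf ?_
    rintro _ ⟨w, c, hc, rfl⟩
    exact EReal.coe_le_coe_iff.2 <|
      (conicObjective_le_fenchelLagrangian hf hu hmin hc).trans
        (fenchelLagrangian_le_of_stationary hconv hf w c)
  refine ⟨(hweak p).antisymm hstrong,
    le_antisymm (sSup_le ?_) (le_sSup_of_le ⟨p, rfl⟩ hstrong)⟩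
  rintro _ ⟨q, rfl⟩
  exact hweak q

end ConicRelaxation

section LogisticLoss

theorem hasDerivAt_log_one_add_exp (u : ℝ) :
    HasDerivAt (fun v => Real.log (1 + Real.exp v)) (Real.sigmoid u) u := by
  refine (((Real.hasDerivAt_exp u).const_add 1).log (by positivity)).congr_deriv ?_
  rw [Real.sigmoid_def, Real.exp_neg]
  field_simp
  ring

theorem convexOn_log_one_add_exp :
    ConvexOn ℝ Set.univ (fun v : ℝ => Real.log (1 + Real.exp v)) := by
  refine Monotone.convexOn_univ_of_deriv
    (fun u => (hasDerivAt_log_one_add_exp u).differentiableAt) ?_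
  rw [funext fun u => (hasDerivAt_log_one_add_exp u).deriv]
  exact Real.sigmoid_monotone

variable (m n : ℕ) (A : Fin m → Fin n → ℝ) (y : Fin m → ℝ)

theorem convexOn_logLoss : ConvexOn ℝ Set.univ (logLoss m n A y) := by
  have hterm (i : Fin m) : ConvexOn ℝ Set.univ fun x : Fin n → ℝ =>
      Real.log (1 + Real.exp (-(y i) * ∑ j, A i j * x j)) := by
    simpa [Function.comp_def, dotForm_apply] using
      convexOn_log_one_add_exp.comp_linearMap (-(y i) • dotForm (A i)).toLinearMap
  exact (convexOn_finset_sum convex_univ fun i _ => hterm i).smul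
    (by positivity : (0 : ℝ) ≤ 1 / m)

theorem hasFDerivAt_logLoss (x : Fin n → ℝ) :
    HasFDerivAt (logLoss m n A y)
      (dotForm fun j => -∑ i, y i / (m * (1 + Real.exp (y i * ∑ k, A i k * x k))) * A i j) x := by
  have hterm (i : Fin m) : HasFDerivAt (fun w : Fin n → ℝ =>
      Real.log (1 + Real.exp (-(y i) * ∑ j, A i j * w j)))
      (Real.sigmoid (-(y i) * ∑ j, A i j * x j) • -(y i) • dotForm (A i)) x := by
    simpa only [Function.comp_def, smul_apply, smul_eq_mul, dotForm_apply]
      using (hasDerivAt_log_one_add_exp _).comp_hasFDerivAt x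
        (-(y i) • dotForm (A i)).hasFDerivAt
  refine ((HasFDerivAt.fun_sum fun i _ => hterm i).const_mul (1 / (m : ℝ))).congr_fderiv ?_
  ext d
  simp only [sum_apply, smul_apply, dotForm_apply, smul_eq_mul, Finset.mul_sum, neg_mul,
    Finset.sum_mul, ← Finset.sum_neg_distrib, Real.sigmoid_def, neg_neg]
  rw [Finset.sum_comm]
  congr! 2
  rw [← div_div]
  ring

end LogisticLoss

/-- Strong Fenchel duality for the regularized conic relaxation: if `(xs, ts, zs)` is an
optimal solution of the conic relaxation attaining `ηCR`, `α` is defined from `xs` and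
`pstar j = γ ∑ᵢ αᵢ A_{ij}`, then the Fenchel dual function `D` (infimum in the extended
reals) satisfies `D pstar = ηCR`, and the dual value `sup_p D p` equals `ηCR`
(no duality gap). -/
theorem strong_fenchel_duality_REG
    (m n : ℕ) (hm : 0 < m) (hn : 0 < n)
    (A : Fin m → Fin n → ℝ) (y : Fin m → ℝ) (hy : ∀ i, y i = 1 ∨ y i = -1)
    (γ μ : ℝ) (hγ : 0 < γ) (hμ : 0 < μ)
    -- (xs, ts, zs) is an optimal solution of the conic relaxation attaining ηCR
    (xs ts zs : Fin n → ℝ)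
    (hts : ∀ j, 0 ≤ ts j) (hzs : ∀ j, 0 ≤ zs j ∧ zs j ≤ 1)
    (hcone_s : ∀ j, (xs j) ^ 2 ≤ zs j * ts j)
    (hopt : ∀ x t z : Fin n → ℝ, (∀ j, 0 ≤ t j) → (∀ j, 0 ≤ z j ∧ z j ≤ 1) →
      (∀ j, (x j) ^ 2 ≤ z j * t j) →
      logLoss m n A y xs + (1 / γ) * ∑ j, ts j + μ * ∑ j, zs j ≤
        logLoss m n A y x + (1 / γ) * ∑ j, t j + μ * ∑ j, z j)
    (ηCR : ℝ)
    (hηCR : ηCR = logLoss m n A y xs + (1 / γ) * ∑ j, ts j + μ * ∑ j, zs j)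
    -- dual quantities defined from xs
    (α : Fin m → ℝ)
    (hα : ∀ i, α i = y i / ((m : ℝ) * (1 + Real.exp (y i * ∑ j, A i j * xs j))))
    (pstar : Fin n → ℝ)
    (hpstar : ∀ j, pstar j = γ * ∑ i, α i * A i j)
    -- D is the Fenchel dual function
    (D : (Fin n → ℝ) → EReal)
    (hD : ∀ p, D p = sInf {v : EReal | ∃ x z : Fin n → ℝ,
      (∀ j, 0 ≤ z j ∧ z j ≤ 1) ∧
      v = ((logLoss m n A y x +
        ∑ j, (μ * z j + p j * x j / γ - (p j) ^ 2 * z j / (4 * γ)) : ℝ) : EReal)}) :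
    D pstar = (ηCR : EReal) ∧
    sSup {w : EReal | ∃ p : Fin n → ℝ, w = D p} = (ηCR : EReal) := by
  obtain rfl : D = fenchelDual (logLoss m n A y) γ μ := funext hD
  have hgrad : HasFDerivAt (logLoss m n A y) (dotForm fun j => -(pstar j / γ)) xs := by
    simpa only [hpstar, hα, mul_div_cancel_left₀ _ hγ.ne'] using hasFDerivAt_logLoss m n A y xs
  exact hηCR ▸ strong_fenchel_duality_REG_general hγ (convexOn_logLoss m n A y) hgrad
    ⟨hts, hzs, hcone_s⟩ fun u hu => hopt u.1 u.2.1 u.2.2 hu.1 hu.2.1 hu.2.2
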